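/- Let K > 0, α ∈ (0,1), β ∈ (0,1), η ∈ (0,1), and let θ < 0 be a real number; set γ := 2(1−α)/K. Let g : [0,1] → ℝ be twice continuously differentiable with |g''(λ)| ≤ K for all λ ∈ [0,1] and with right derivative at 0 satisfying g'(0) ≤ η θ. Then: (a) the set A := { ℓ ∈ ℕ : g(β^ℓ) − g(0) ≤ α β^ℓ η θ } is nonempty; (b) its least element ℓ* satisfies β^{ℓ*} ≥ β · min(1, η γ |θ|); and (c) consequently g(β^{ℓ*}) − g(0) ≤ −α β η · min(1, η γ |θ|) · |θ|. -/

import Mathlib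

/-!
Integrating the bound on `g''` twice shows that `g s - g 0` lies below the quadratic model
`g' 0 * s + K / 2 * s ^ 2`. The Armijo test compares it with the line of slope `α η θ`, and since
`g' 0 ≤ η θ < 0` the quadratic term is absorbed by the slack `(1 - α) η |θ| s` as soon as
`s ≤ η γ |θ|`; so all sufficiently small steps pass. If the first step passing the test is not the
initial one, then the step before it failed, hence was longer than `η γ |θ|`, and the accepted step
is `β` times as long.
-/

open Set

lemma le_of_hasDerivWithinAt_le_on_Icc {a b x : ℝ} {f f' B B' : ℝ → ℝ}
    (hf : ∀ y ∈ Icc a b, HasDerivWithinAt f (f' y) (Icc a b) y)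
    (hB : ∀ y ∈ Icc a b, HasDerivWithinAt B (B' y) (Icc a b) y)
    (ha : f a ≤ B a) (hle : ∀ y ∈ Icc a b, f' y ≤ B' y) (hx : x ∈ Icc a b) :
    f x ≤ B x :=
  image_le_of_deriv_right_le_deriv_boundary
    (HasDerivWithinAt.continuousOn hf)
    (fun y hy ↦ (hf y (Ico_subset_Icc_self hy)).mono_of_mem_nhdsWithin (Icc_mem_nhdsGE_of_mem hy))
    ha (HasDerivWithinAt.continuousOn hB)
    (fun y hy ↦ (hB y (Ico_subset_Icc_self hy)).mono_of_mem_nhdsWithin (Icc_mem_nhdsGE_of_mem hy))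
    (fun y hy ↦ hle y (Ico_subset_Icc_self hy)) hx

lemma sub_le_mul_sub_of_hasDerivWithinAt_le {a b x K : ℝ} {f f' : ℝ → ℝ}
    (hf : ∀ y ∈ Icc a b, HasDerivWithinAt f (f' y) (Icc a b) y)
    (hle : ∀ y ∈ Icc a b, f' y ≤ K) (hx : x ∈ Icc a b) :
    f x - f a ≤ K * (x - a) := by
  have hline (y : ℝ) : HasDerivAt (fun z ↦ f a + K * (z - a)) K y := by
    simpa using (((hasDerivAt_id y).sub_const a).const_mul K).const_add (f a)
  exact sub_le_iff_le_add'.mpr <| le_of_hasDerivWithinAt_le_on_Icc hf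
    (fun y _ ↦ (hline y).hasDerivWithinAt) (by simp) hle hx

lemma sub_le_quadratic_of_hasDerivWithinAt_le {a b x m K : ℝ} {f f' : ℝ → ℝ}
    (hf : ∀ y ∈ Icc a b, HasDerivWithinAt f (f' y) (Icc a b) y)
    (hle : ∀ y ∈ Icc a b, f' y ≤ m + K * (y - a)) (hx : x ∈ Icc a b) :
    f x - f a ≤ m * (x - a) + K / 2 * (x - a) ^ 2 := by
  have hparabola (y : ℝ) : HasDerivAt (fun z ↦ f a + (m * (z - a) + K / 2 * (z - a) ^ 2))
      (m + K * (y - a)) y := by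
    have hsub : HasDerivAt (fun z ↦ z - a) 1 y := (hasDerivAt_id y).sub_const a
    exact (((hsub.const_mul m).add ((hsub.pow 2).const_mul (K / 2))).const_add (f a)).congr_deriv
      (by norm_num; ring)
  exact sub_le_iff_le_add'.mpr <| le_of_hasDerivWithinAt_le_on_Icc hf
    (fun y _ ↦ (hparabola y).hasDerivWithinAt) (by simp) hle hx

lemma quadratic_le_armijo_line {𝕜 : Type*} [Field 𝕜] [LinearOrder 𝕜] [IsStrictOrderedRing 𝕜]
    {K α m s : 𝕜} (hK : 0 < K) (hs : 0 ≤ s) (hle : s ≤ 2 * (1 - α) / K * -m) :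
    m * s + K / 2 * s ^ 2 ≤ α * s * m := by
  have hKs : s * K ≤ 2 * (1 - α) * -m := by
    rwa [div_mul_eq_mul_div, le_div_iff₀ hK] at hle
  calc m * s + K / 2 * s ^ 2 = m * s + s * K * s / 2 := by ring
    _ ≤ m * s + 2 * (1 - α) * -m * s / 2 := by gcongr
    _ = α * s * m := by ring

lemma sub_le_armijo_line_of_hasDerivWithinAt_le {a b x m K α : ℝ} {f f' : ℝ → ℝ} (hK : 0 < K)
    (hf : ∀ y ∈ Icc a b, HasDerivWithinAt f (f' y) (Icc a b) y)
    (hle : ∀ y ∈ Icc a b, f' y ≤ m + K * (y - a)) (hx : x ∈ Icc a b)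
    (hshort : x - a ≤ 2 * (1 - α) / K * -m) :
    f x - f a ≤ α * (x - a) * m :=
  (sub_le_quadratic_of_hasDerivWithinAt_le hf hle hx).trans
    (quadratic_le_armijo_line hK (sub_nonneg.mpr hx.1) hshort)

lemma mul_min_le_pow_sInf {R : Type*} [Semiring R] [LinearOrder R] [IsStrictOrderedRing R]
    {β σ : R} {A : Set ℕ} (hβ₀ : 0 ≤ β) (hβ₁ : β ≤ 1) (hA : ∀ l : ℕ, β ^ l ≤ σ → l ∈ A) :
    β * min 1 σ ≤ β ^ sInf A := by
  rcases hfirst : sInf A with _ | n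
  · calc β * min 1 σ ≤ β * 1 := by gcongr; exact min_le_left 1 σ
      _ ≤ β ^ 0 := by simpa using hβ₁
  · have hrejected : n ∉ A := Nat.notMem_of_lt_sInf (hfirst ▸ n.lt_succ_self)
    have hlong : σ < β ^ n := lt_of_not_ge (mt (hA n) hrejected)
    calc β * min 1 σ ≤ β * β ^ n := by gcongr; exact (min_le_right 1 σ).trans hlong.le
      _ = β ^ (n + 1) := (pow_succ' β n).symm

theorem armijo_step_analysis_general {K α β η θ γ : ℝ}
    (hK : 0 < K) (hα : α ∈ Ioo (0 : ℝ) 1) (hβ : β ∈ Ioo (0 : ℝ) 1)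
    (hη : 0 < η) (hθ : θ < 0) (hγ : γ = 2 * (1 - α) / K) {g g' : ℝ → ℝ}
    (hd : ∀ s ∈ Icc (0 : ℝ) 1, HasDerivWithinAt g (g' s) (Icc (0 : ℝ) 1) s)
    (hgrowth : ∀ s ∈ Icc (0 : ℝ) 1, g' s - g' 0 ≤ K * s) (hg'0 : g' 0 ≤ η * θ) :
    {l : ℕ | g (β ^ l) - g 0 ≤ α * β ^ l * η * θ}.Nonempty ∧
    β ^ (sInf {l : ℕ | g (β ^ l) - g 0 ≤ α * β ^ l * η * θ}) ≥ β * min 1 (η * γ * |θ|) ∧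
    g (β ^ (sInf {l : ℕ | g (β ^ l) - g 0 ≤ α * β ^ l * η * θ})) - g 0 ≤
      -(α * β * η * min 1 (η * γ * |θ|) * |θ|) := by
  set A := {l : ℕ | g (β ^ l) - g 0 ≤ α * β ^ l * η * θ}
  rw [abs_of_neg hθ]
  have hshort (l : ℕ) (hl : β ^ l ≤ η * γ * -θ) : l ∈ A := by
    have hmem : β ^ l ∈ Icc (0 : ℝ) 1 := ⟨pow_nonneg hβ.1.le l, pow_le_one₀ hβ.1.le hβ.2.le⟩
    have hslack : β ^ l - 0 ≤ 2 * (1 - α) / K * -(η * θ) := by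
      rw [sub_zero, ← hγ]
      exact hl.trans_eq (by ring)
    have harmijo := sub_le_armijo_line_of_hasDerivWithinAt_le hK hd
      (fun s hs ↦ by linarith [hgrowth s hs]) hmem hslack
    rwa [sub_zero, ← mul_assoc] at harmijo
  have hne : A.Nonempty := by
    have hγ₀ : 0 < γ := hγ ▸ div_pos (mul_pos two_pos (sub_pos.mpr hα.2)) hK
    have hthreshold : 0 < η * γ * -θ := mul_pos (mul_pos hη hγ₀) (neg_pos.mpr hθ)
    exact (exists_pow_lt_of_lt_one hthreshold hβ.2).imp fun l hl ↦ hshort l hl.le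
  have hstep : β * min 1 (η * γ * -θ) ≤ β ^ sInf A := mul_min_le_pow_sInf hβ.1.le hβ.2.le hshort
  have hslope : 0 ≤ α * η * -θ := (mul_pos (mul_pos hα.1 hη) (neg_pos.mpr hθ)).le
  refine ⟨hne, hstep, ?_⟩
  calc g (β ^ sInf A) - g 0 ≤ α * β ^ sInf A * η * θ := Nat.sInf_mem hne
    _ = -(α * η * -θ * β ^ sInf A) := by ring
    _ ≤ -(α * η * -θ * (β * min 1 (η * γ * -θ))) := by gcongr
    _ = -(α * β * η * min 1 (η * γ * -θ) * -θ) := by ring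

/-- The Armijo step-size analysis in the proof of **Proposition 3.4** (Eqs. (26)–(30)).
For a function `g` twice continuously differentiable on `[0,1]` with `|g''| ≤ K`
and right derivative at `0` at most `η θ < 0`:
(a) the Armijo set `A = {ℓ : g(βˡ) − g(0) ≤ α βˡ η θ}` is nonempty;
(b) its least element `ℓ*` satisfies `β^{ℓ*} ≥ β · min 1 (η γ |θ|)` where `γ = 2(1−α)/K`;
(c) consequently `g(β^{ℓ*}) − g(0) ≤ −α β η · min 1 (η γ |θ|) · |θ|`. -/
theorem armijo_step_analysis (K α β η θ γ : ℝ)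
    (hK : 0 < K) (hα : α ∈ Ioo (0 : ℝ) 1) (hβ : β ∈ Ioo (0 : ℝ) 1)
    (hη : η ∈ Ioo (0 : ℝ) 1) (hθ : θ < 0) (hγ : γ = 2 * (1 - α) / K)
    (g g' g'' : ℝ → ℝ)
    (hd1 : ∀ l ∈ Icc (0 : ℝ) 1, HasDerivWithinAt g (g' l) (Icc (0 : ℝ) 1) l)
    (hd2 : ∀ l ∈ Icc (0 : ℝ) 1, HasDerivWithinAt g' (g'' l) (Icc (0 : ℝ) 1) l)
    (hcont : ContinuousOn g'' (Icc (0 : ℝ) 1))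
    (hbound : ∀ l ∈ Icc (0 : ℝ) 1, |g'' l| ≤ K)
    (hg'0 : g' 0 ≤ η * θ) :
    {l : ℕ | g (β ^ l) - g 0 ≤ α * β ^ l * η * θ}.Nonempty ∧
    β ^ (sInf {l : ℕ | g (β ^ l) - g 0 ≤ α * β ^ l * η * θ}) ≥ β * min 1 (η * γ * |θ|) ∧
    g (β ^ (sInf {l : ℕ | g (β ^ l) - g 0 ≤ α * β ^ l * η * θ})) - g 0 ≤
      -(α * β * η * min 1 (η * γ * |θ|) * |θ|) := by
  have hgrowth (s : ℝ) (hs : s ∈ Icc (0 : ℝ) 1) : g' s - g' 0 ≤ K * s := by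
    simpa only [sub_zero] using
      sub_le_mul_sub_of_hasDerivWithinAt_le hd2 (fun l hl ↦ le_of_abs_le (hbound l hl)) hs
  exact armijo_step_analysis_general hK hα hβ hη.1 hθ hγ hd1 hgrowth hg'0
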